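/- Consider the tensorized Hermite basis (h_n) of L²(ℝ³). Let δ > 0, ℓ ≥ 4 an integer, and N ≥ 1. Then there exists a constant C_N > 0 such that whenever the indices n₁, …, n_ℓ satisfy λ_{n₁} ≥ λ_{n₂}^{1+δ} and λ_{n₂} ≥ λ_{n₃} ≥ ⋯ ≥ λ_{n_ℓ}, one has |∫_{ℝ³} ∏_{j=1}^{ℓ} h_{n_j}(x) dx| ≤ C_N λ_{n₁}^{−N}. -/

import Mathlib

open MeasureTheory Complex Filter Set
open scoped ENNReal

noncomputable section

abbrev Rd (d : ℕ) := EuclideanSpace ℝ (Fin d)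

/-- The one-dimensional Hermite function
`e_k(x) = (-1)^k (k!)^{-1/2} 2^{-k/2} π^{-1/4} e^{x²/2} (d^k/dx^k)(e^{-x²})`. -/
def hermiteFun (k : ℕ) (x : ℝ) : ℝ :=
  (-1 : ℝ) ^ k *
    ((Nat.factorial k : ℝ) ^ (-(1/2 : ℝ)) * (2 : ℝ) ^ (-(k : ℝ)/2) *
      Real.pi ^ (-(1/4 : ℝ))) *
    Real.exp (x ^ 2 / 2) * iteratedDeriv k (fun y => Real.exp (-y ^ 2)) x

/-- The tensorized Hermite function on `ℝ³`. -/
def hermite3 (n : Fin 3 → ℕ) (x : Rd 3) : ℝ :=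
  ∏ i, hermiteFun (n i) (x i)

/-- `λ_n = √(2(n₁+n₂+n₃)+3)`. -/
def lam3 (n : Fin 3 → ℕ) : ℝ :=
  Real.sqrt (2 * (∑ i, (n i : ℝ)) + 3)

theorem hermiteNorm_succ (k : ℕ) :
    ((Nat.factorial k : ℝ) ^ (-(1/2 : ℝ)) * (2 : ℝ) ^ (-(k : ℝ)/2) * Real.pi ^ (-(1/4 : ℝ))) =
    √(2 * (k + 1 : ℕ)) * ((Nat.factorial (k + 1) : ℝ) ^ (-(1/2 : ℝ)) *
      (2 : ℝ) ^ (-((k + 1 : ℕ) : ℝ)/2) * Real.pi ^ (-(1/4 : ℝ))) := by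
  have h1 : (-((k + 1 : ℕ) : ℝ)/2) = -(k : ℝ)/2 + (-(1/2 : ℝ)) := by push_cast; ring
  rw [h1, Real.rpow_add two_pos, Nat.factorial_succ, Nat.cast_mul,
    Real.mul_rpow (by positivity) (by positivity), Real.sqrt_eq_rpow,
    Real.mul_rpow (by positivity) (by positivity), Real.rpow_neg (by positivity : (0:ℝ) ≤ (k + 1 : ℕ)),
    Real.rpow_neg two_pos.le]
  have h2 : (2 : ℝ) ^ (1 / 2 : ℝ) ≠ 0 := by positivity
  have h3 : (((k + 1 : ℕ) : ℝ)) ^ (1 / 2 : ℝ) ≠ 0 := by positivity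
  field_simp

/-- The polynomial `P_k` with `(d^k/dx^k) e^{-x²} = P_k(x) e^{-x²}`. -/
def gaussPoly : ℕ → Polynomial ℝ
  | 0 => 1
  | k + 1 => Polynomial.derivative (gaussPoly k) - Polynomial.C 2 * Polynomial.X * gaussPoly k

theorem derivative_gaussPoly (k : ℕ) :
    Polynomial.derivative (gaussPoly k) = -Polynomial.C (2 * (k : ℝ)) * gaussPoly (k - 1) := by
  induction k with
  | zero => simp [gaussPoly]
  | succ k ih =>
    have h : Polynomial.derivative (Polynomial.derivative (gaussPoly k)) =
        -Polynomial.C (2 * (k : ℝ)) * (gaussPoly k + Polynomial.C 2 * Polynomial.X *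
          gaussPoly (k - 1)) := by
      rw [ih]
      cases k with
      | zero => simp
      | succ k => simp [gaussPoly]
    rw [gaussPoly, Polynomial.derivative_sub, h, Polynomial.derivative_mul, ih]
    simp only [Polynomial.derivative_mul, Polynomial.derivative_C, Polynomial.derivative_X,
      Nat.add_sub_cancel, Nat.cast_add, Nat.cast_one, map_mul, map_add, map_one]
    ring

theorem hasDerivAt_poly_mul_gaussian (P : Polynomial ℝ) (b x : ℝ) :
    HasDerivAt (fun y => P.eval y * Real.exp (-b * y ^ 2))
      ((Polynomial.derivative P - Polynomial.C (2 * b) * Polynomial.X * P).eval x *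
        Real.exp (-b * x ^ 2)) x := by
  have h := (P.hasDerivAt x).mul (((hasDerivAt_pow 2 x).const_mul (-b)).exp)
  refine h.congr_deriv ?_
  simp
  ring

theorem iteratedDeriv_gaussian (k : ℕ) :
    iteratedDeriv k (fun y : ℝ => Real.exp (-y ^ 2)) =
      fun x => (gaussPoly k).eval x * Real.exp (-1 * x ^ 2) := by
  induction k with
  | zero => ext; simp [gaussPoly]
  | succ k ih =>
    ext x
    rw [iteratedDeriv_succ, ih, (hasDerivAt_poly_mul_gaussian _ 1 x).deriv, gaussPoly, mul_one]

theorem hermiteFun_eq (k : ℕ) (x : ℝ) :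
    hermiteFun k x = (-1 : ℝ) ^ k *
    ((Nat.factorial k : ℝ) ^ (-(1/2 : ℝ)) * (2 : ℝ) ^ (-(k : ℝ)/2) * Real.pi ^ (-(1/4 : ℝ))) *
      ((gaussPoly k).eval x * Real.exp (-(1/2) * x ^ 2)) := by
  rw [hermiteFun, iteratedDeriv_gaussian]
  have : Real.exp (-(1/2) * x ^ 2) = Real.exp (x ^ 2 / 2) * Real.exp (-1 * x ^ 2) := by
    rw [← Real.exp_add]; congr 1; ring
  rw [this]; ring

theorem mul_eval_gaussPoly (k : ℕ) (x : ℝ) :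
    x * (gaussPoly k).eval x = -k * (gaussPoly (k - 1)).eval x - (gaussPoly (k + 1)).eval x / 2 := by
  rw [gaussPoly, derivative_gaussPoly]
  simp only [Polynomial.eval_sub, Polynomial.eval_mul, Polynomial.eval_neg, Polynomial.eval_C,
    Polynomial.eval_X]
  ring

theorem mul_hermiteFun (k : ℕ) (x : ℝ) :
    x * hermiteFun k x = √(2 * k) / 2 * hermiteFun (k - 1) x +
      √(2 * (k + 1 : ℕ)) / 2 * hermiteFun (k + 1) x := by
  simp only [hermiteFun_eq]
  have h := mul_eval_gaussPoly k x
  cases k with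
  | zero =>
    rw [hermiteNorm_succ 0]
    simp only [Nat.cast_zero, mul_zero, Real.sqrt_zero, zero_div, zero_mul, zero_add, neg_zero,
      zero_sub, pow_zero, pow_one] at h ⊢
    linear_combination (√(2 * (1 : ℕ)) * ((Nat.factorial 1 : ℝ) ^ (-(1/2 : ℝ)) *
      (2 : ℝ) ^ (-((1 : ℕ) : ℝ)/2) * Real.pi ^ (-(1/4 : ℝ)))) * Real.exp (-(1/2) * x ^ 2) * h
  | succ k =>
    rw [Nat.add_sub_cancel] at h ⊢
    rw [hermiteNorm_succ k, hermiteNorm_succ (k + 1)]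
    have hs := Real.mul_self_sqrt (show (0:ℝ) ≤ 2 * (k + 1 : ℕ) by positivity)
    generalize √(2 * ((k + 1 : ℕ) : ℝ)) = s at *
    generalize √(2 * ((k + 1 + 1 : ℕ) : ℝ)) = t at *
    generalize ((Nat.factorial (k + 1 + 1) : ℝ) ^ (-(1/2 : ℝ)) *
      (2 : ℝ) ^ (-((k + 1 + 1 : ℕ) : ℝ)/2) * Real.pi ^ (-(1/4 : ℝ))) = c
    generalize Real.exp (-(1/2) * x ^ 2) = E
    simp only [pow_succ]
    linear_combination (-(-1) ^ k * t * c * E) * h -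
      (-1) ^ k * t * c * E * (gaussPoly k).eval x / 2 * hs

theorem hasDerivAt_hermiteFun (k : ℕ) (x : ℝ) :
    HasDerivAt (hermiteFun k)
      (x * hermiteFun k x - √(2 * (k + 1 : ℕ)) * hermiteFun (k + 1) x) x := by
  have h := (hasDerivAt_poly_mul_gaussian (gaussPoly k) (1/2) x).const_mul ((-1 : ℝ) ^ k *
    ((Nat.factorial k : ℝ) ^ (-(1/2 : ℝ)) * (2 : ℝ) ^ (-(k : ℝ)/2) * Real.pi ^ (-(1/4 : ℝ))))
  rw [show hermiteFun k = _ from funext (hermiteFun_eq k)]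
  refine h.congr_deriv ?_
  rw [hermiteFun_eq (k + 1), hermiteNorm_succ k, gaussPoly]
  simp only [Polynomial.eval_sub, Polynomial.eval_mul, Polynomial.eval_C, Polynomial.eval_X,
    pow_succ]
  ring

theorem hasDerivAt_hermiteFun_sub (k : ℕ) (x : ℝ) :
    HasDerivAt (hermiteFun k) (√(2 * k) * hermiteFun (k - 1) x - x * hermiteFun k x) x := by
  refine (hasDerivAt_hermiteFun k x).congr_deriv ?_
  linear_combination 2 * mul_hermiteFun k x

theorem integrable_poly_mul_gaussian (P : Polynomial ℝ) {b : ℝ} (hb : 0 < b) :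
    Integrable (fun x => P.eval x * Real.exp (-b * x ^ 2)) := by
  induction P using Polynomial.induction_on' with
  | add p q hp hq => simpa [add_mul, Pi.add_def] using hp.add hq
  | monomial n a =>
    have := (integrable_rpow_mul_exp_neg_mul_sq hb (s := n)
      (by linarith [(Nat.cast_nonneg n : (0:ℝ) ≤ n)])).const_mul a
    simpa [mul_assoc] using this

theorem exists_prod_hermiteFun_eq {ι : Type*} (s : Finset ι) (k : ι → ℕ) :
    ∃ P : Polynomial ℝ, ∀ x, ∏ j ∈ s, hermiteFun (k j) x =
      P.eval x * Real.exp (-(s.card / 2) * x ^ 2) := by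
  classical
  refine ⟨∏ j ∈ s, (Polynomial.C ((-1 : ℝ) ^ k j * ((Nat.factorial (k j) : ℝ) ^ (-(1/2 : ℝ)) *
    (2 : ℝ) ^ (-(k j : ℝ)/2) * Real.pi ^ (-(1/4 : ℝ)))) * gaussPoly (k j)), fun x => ?_⟩
  simp only [hermiteFun_eq, Polynomial.eval_prod, Polynomial.eval_mul, Polynomial.eval_C,
    ← mul_assoc]
  rw [Finset.prod_mul_distrib, Finset.prod_const, ← Real.exp_nat_mul]
  congr 2
  ring

theorem integrable_hermiteFun_mul_prod {ι : Type*} [Fintype ι] (a : ℕ) (k : ι → ℕ) :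
    Integrable (fun x => hermiteFun a x * ∏ j, hermiteFun (k j) x) := by
  obtain ⟨P, hP⟩ := exists_prod_hermiteFun_eq Finset.univ (fun o : Option ι => o.elim a k)
  have := integrable_poly_mul_gaussian P (b := (Finset.univ : Finset (Option ι)).card / 2)
    (by simp; positivity)
  refine this.congr (Eventually.of_forall fun x => ?_)
  simp only [← hP, Fintype.prod_option, Option.elim]

theorem prod_hermiteFun_update {ι : Type*} [Fintype ι] [DecidableEq ι] (k : ι → ℕ) (j : ι)
    (v : ℕ) (x : ℝ) : ∏ i, hermiteFun (Function.update k j v i) x =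
      hermiteFun v x * ∏ i ∈ Finset.univ.erase j, hermiteFun (k i) x := by
  rw [← Finset.mul_prod_erase _ _ (Finset.mem_univ j), Function.update_self]
  congr 1
  refine Finset.prod_congr rfl fun i hi => ?_
  rw [Function.update_of_ne (Finset.ne_of_mem_erase hi)]

/-- The integral of a product of one-dimensional Hermite functions. -/
def hermiteInt {ι : Type*} [Fintype ι] (a : ℕ) (k : ι → ℕ) : ℝ :=
  ∫ x, hermiteFun a x * ∏ j, hermiteFun (k j) x

/-- Integration by parts: the creation operator producing `e_{a+1}` from `e_a` is moved onto the
other factors. -/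
theorem hermiteInt_succ {ι : Type*} [Fintype ι] [DecidableEq ι] (a : ℕ) (k : ι → ℕ) (j₀ : ι) :
    √(2 * (a + 1 : ℕ)) * hermiteInt (a + 1) k =
      ∑ j, √(2 * k j) * hermiteInt a (Function.update k j (k j - 1)) -
      ((Fintype.card ι : ℝ) - 1) *
        (√(2 * k j₀) / 2 * hermiteInt a (Function.update k j₀ (k j₀ - 1)) +
          √(2 * (k j₀ + 1 : ℕ)) / 2 * hermiteInt a (Function.update k j₀ (k j₀ + 1))) := by
  set R : ℝ → ℝ := fun x =>
    ∑ j, √(2 * k j) * (hermiteFun a x * ∏ i, hermiteFun (Function.update k j (k j - 1) i) x) -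
      ((Fintype.card ι : ℝ) - 1) *
        (√(2 * k j₀) / 2 *
            (hermiteFun a x * ∏ i, hermiteFun (Function.update k j₀ (k j₀ - 1) i) x) +
          √(2 * (k j₀ + 1 : ℕ)) / 2 *
            (hermiteFun a x * ∏ i, hermiteFun (Function.update k j₀ (k j₀ + 1) i) x)) with hR
  have hint := fun (b : ℕ) (l : ι → ℕ) => integrable_hermiteFun_mul_prod b l
  have hs : Integrable (fun x => ∑ j, √(2 * k j) *
      (hermiteFun a x * ∏ i, hermiteFun (Function.update k j (k j - 1) i) x)) :=
    integrable_finsetSum _ fun j _ => (hint _ _).const_mul _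
  have hx : Integrable (fun x => ((Fintype.card ι : ℝ) - 1) *
        (√(2 * k j₀) / 2 *
            (hermiteFun a x * ∏ i, hermiteFun (Function.update k j₀ (k j₀ - 1) i) x) +
          √(2 * (k j₀ + 1 : ℕ)) / 2 *
            (hermiteFun a x * ∏ i, hermiteFun (Function.update k j₀ (k j₀ + 1) i) x))) :=
    (((hint _ _).const_mul _).add ((hint _ _).const_mul _)).const_mul _
  have hRi : Integrable R := hs.sub hx
  have hRI : ∫ x, R x = ∑ j, √(2 * k j) * hermiteInt a (Function.update k j (k j - 1)) -
      ((Fintype.card ι : ℝ) - 1) *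
        (√(2 * k j₀) / 2 * hermiteInt a (Function.update k j₀ (k j₀ - 1)) +
          √(2 * (k j₀ + 1 : ℕ)) / 2 * hermiteInt a (Function.update k j₀ (k j₀ + 1))) := by
    rw [hR, integral_sub hs hx, integral_finsetSum _ fun j _ => (hint _ _).const_mul _,
      integral_const_mul, integral_add ((hint _ _).const_mul _) ((hint _ _).const_mul _)]
    simp only [integral_const_mul, hermiteInt]
  have hL : Integrable (fun x => √(2 * (a + 1 : ℕ)) *
      (hermiteFun (a + 1) x * ∏ j, hermiteFun (k j) x)) := (hint _ _).const_mul _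
  have hderiv : ∀ x, HasDerivAt (fun x => hermiteFun a x * ∏ j, hermiteFun (k j) x)
      (R x - √(2 * (a + 1 : ℕ)) * (hermiteFun (a + 1) x * ∏ j, hermiteFun (k j) x)) x := by
    intro x
    refine ((hasDerivAt_hermiteFun a x).mul (HasDerivAt.fun_finsetProd
      fun j _ => hasDerivAt_hermiteFun_sub (k j) x)).congr_deriv ?_
    have hj : ∀ j, (∏ i ∈ Finset.univ.erase j, hermiteFun (k i) x) • (√(2 * k j) *
        hermiteFun (k j - 1) x - x * hermiteFun (k j) x) =
        √(2 * k j) * ∏ i, hermiteFun (Function.update k j (k j - 1) i) x -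
          x * ∏ i, hermiteFun (k i) x := by
      intro j
      rw [prod_hermiteFun_update, ← Finset.mul_prod_erase _ _ (Finset.mem_univ j), smul_eq_mul]
      ring
    have h0 : x * ∏ i, hermiteFun (k i) x =
        √(2 * k j₀) / 2 * ∏ i, hermiteFun (Function.update k j₀ (k j₀ - 1) i) x +
          √(2 * (k j₀ + 1 : ℕ)) / 2 * ∏ i, hermiteFun (Function.update k j₀ (k j₀ + 1) i) x := by
      rw [prod_hermiteFun_update, prod_hermiteFun_update,
        ← Finset.mul_prod_erase _ _ (Finset.mem_univ j₀)]
      linear_combination (∏ i ∈ Finset.univ.erase j₀, hermiteFun (k i) x) *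
        mul_hermiteFun (k j₀) x
    simp only [hj, hR, Finset.sum_sub_distrib, Finset.sum_const, nsmul_eq_mul, Finset.card_univ,
      mul_sub, Finset.mul_sum]
    simp only [mul_left_comm (hermiteFun a x) (√_)]
    linear_combination (1 - (Fintype.card ι : ℝ)) * hermiteFun a x * h0
  have h := integral_eq_zero_of_hasDerivAt_of_integrable hderiv (hRi.sub hL) (hint a k)
  rw [integral_sub hRi hL, hRI, integral_const_mul] at h
  exact (sub_eq_zero.1 h).symm

theorem integral_hermiteFun_sq (k : ℕ) : ∫ x, hermiteFun k x ^ 2 = 1 := by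
  induction k with
  | zero =>
    have h : ∀ x, hermiteFun 0 x ^ 2 = (√Real.pi)⁻¹ * Real.exp (-1 * x ^ 2) := by
      intro x
      rw [hermiteFun_eq]
      have h1 : (Real.pi ^ (-(1/4 : ℝ))) ^ 2 = (√Real.pi)⁻¹ := by
        rw [← Real.rpow_natCast, ← Real.rpow_mul Real.pi_pos.le, Real.sqrt_eq_rpow,
          ← Real.rpow_neg Real.pi_pos.le]
        norm_num
      have h2 : Real.exp (-(1/2) * x ^ 2) ^ 2 = Real.exp (-1 * x ^ 2) := by
        rw [← Real.exp_nat_mul]; congr 1; push_cast; ring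
      rw [← h1, ← h2]
      simp [gaussPoly]
      ring
    simp only [h]
    rw [integral_const_mul, integral_gaussian, div_one]
    exact inv_mul_cancel₀ (by positivity)
  | succ k ih =>
    have h := hermiteInt_succ k (fun _ : Unit => k + 1) ()
    have hu : Function.update (fun _ : Unit => k + 1) () k = fun _ => k := by ext; simp
    simp only [hermiteInt, Fintype.card_unit, Finset.univ_unique, Finset.sum_singleton,
      Finset.prod_singleton, Nat.cast_one, sub_self, zero_mul, sub_zero, Nat.add_sub_cancel,
      PUnit.default_eq_unit, hu] at h
    simp only [sq] at ih ⊢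
    rw [ih] at h
    have h0 : √(2 * (k + 1 : ℕ)) ≠ 0 := by positivity
    exact mul_left_cancel₀ h0 h

theorem integrable_hermiteFun_mul (a b : ℕ) :
    Integrable (fun x => hermiteFun a x * hermiteFun b x) := by
  simpa using integrable_hermiteFun_mul_prod a (fun _ : Unit => b)

theorem integral_abs_hermiteFun_mul_le (a b : ℕ) :
    ∫ x, |hermiteFun a x * hermiteFun b x| ≤ 1 := by
  have ha : Integrable fun x => hermiteFun a x ^ 2 / 2 := by
    simpa [sq] using (integrable_hermiteFun_mul a a).div_const 2
  have hb : Integrable fun x => hermiteFun b x ^ 2 / 2 := by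
    simpa [sq] using (integrable_hermiteFun_mul b b).div_const 2
  calc ∫ x, |hermiteFun a x * hermiteFun b x|
      ≤ ∫ x, (hermiteFun a x ^ 2 / 2 + hermiteFun b x ^ 2 / 2) := by
        refine integral_mono (integrable_hermiteFun_mul a b).abs (ha.add hb) fun x => ?_
        dsimp only
        rw [abs_mul]
        nlinarith [sq_nonneg (|hermiteFun a x| - |hermiteFun b x|), sq_abs (hermiteFun a x),
          sq_abs (hermiteFun b x)]
    _ = 1 := by
        rw [integral_add ha hb, integral_div, integral_div, integral_hermiteFun_sq,
          integral_hermiteFun_sq]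
        norm_num

theorem abs_hermiteFun_le (k : ℕ) (x : ℝ) : |hermiteFun k x| ≤ 2 * (k + 1) := by
  have hderiv : ∀ y, HasDerivAt (fun y => hermiteFun k y * hermiteFun k y)
      (√(2 * k) * (hermiteFun k y * hermiteFun (k - 1) y) -
        √(2 * (k + 1 : ℕ)) * (hermiteFun k y * hermiteFun (k + 1) y)) y := fun y => by
    refine ((hasDerivAt_hermiteFun k y).mul (hasDerivAt_hermiteFun_sub k y)).congr_deriv ?_
    ring
  have h1 := (integrable_hermiteFun_mul k (k - 1)).const_mul (√(2 * k))
  have h2 := (integrable_hermiteFun_mul k (k + 1)).const_mul (√(2 * (k + 1 : ℕ)))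
  have hi := integrable_hermiteFun_mul k k
  have h3 := integral_Iic_of_hasDerivAt_of_tendsto' (a := x) (fun y _ => hderiv y)
    (h1.sub h2).integrableOn (tendsto_zero_of_hasDerivAt_of_integrableOn_Iic (a := x)
      (fun y _ => hderiv y) (h1.sub h2).integrableOn hi.integrableOn)
  have h4 : hermiteFun k x * hermiteFun k x ≤ √(2 * k) + √(2 * (k + 1 : ℕ)) := by
    rw [sub_zero] at h3
    rw [← h3]
    calc _ ≤ ∫ y in Iic x, (√(2 * k) * |hermiteFun k y * hermiteFun (k - 1) y| +
            √(2 * (k + 1 : ℕ)) * |hermiteFun k y * hermiteFun (k + 1) y|) := by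
          refine setIntegral_mono (h1.sub h2).integrableOn
            (((integrable_hermiteFun_mul k (k - 1)).abs.const_mul _).add
            ((integrable_hermiteFun_mul k (k + 1)).abs.const_mul _)).integrableOn fun y => ?_
          have e1 := mul_le_mul_of_nonneg_left (le_abs_self (hermiteFun k y * hermiteFun (k - 1) y))
            (Real.sqrt_nonneg (2 * k))
          have e2 := mul_le_mul_of_nonneg_left
            (neg_abs_le (hermiteFun k y * hermiteFun (k + 1) y)) (Real.sqrt_nonneg (2 * (k + 1 : ℕ)))
          dsimp only
          linarith
      _ ≤ ∫ y, (√(2 * k) * |hermiteFun k y * hermiteFun (k - 1) y| +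
            √(2 * (k + 1 : ℕ)) * |hermiteFun k y * hermiteFun (k + 1) y|) :=
          setIntegral_le_integral (((integrable_hermiteFun_mul k (k - 1)).abs.const_mul _).add
            ((integrable_hermiteFun_mul k (k + 1)).abs.const_mul _))
            (Eventually.of_forall fun y => by simp only [Pi.zero_apply]; positivity)
      _ ≤ √(2 * k) * 1 + √(2 * (k + 1 : ℕ)) * 1 := by
          rw [integral_add ((integrable_hermiteFun_mul k (k - 1)).abs.const_mul _)
            ((integrable_hermiteFun_mul k (k + 1)).abs.const_mul _), integral_const_mul,
            integral_const_mul]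
          gcongr <;> exact integral_abs_hermiteFun_mul_le _ _
      _ = _ := by ring
  have h5 : √(2 * k) ≤ 2 * (k + 1) := Real.sqrt_le_iff.2 ⟨by positivity, by nlinarith⟩
  have h6 : √(2 * (k + 1 : ℕ)) ≤ 2 * (k + 1) :=
    Real.sqrt_le_iff.2 ⟨by positivity, by push_cast; nlinarith⟩
  have hk : (0 : ℝ) ≤ k := Nat.cast_nonneg k
  exact abs_le_of_sq_le_sq (by nlinarith) (by positivity)

theorem abs_hermiteInt_le {ι : Type*} [Fintype ι] [Nonempty ι] (a : ℕ) (k : ι → ℕ) {R : ℝ}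
    (hk : ∀ j, (k j : ℝ) ≤ R) : |hermiteInt a k| ≤ (2 * (R + 1)) ^ Fintype.card ι := by
  classical
  obtain ⟨j₀⟩ := ‹Nonempty ι›
  have hR : 0 ≤ R := (Nat.cast_nonneg _).trans (hk j₀)
  calc |hermiteInt a k| ≤ ∫ x, |hermiteFun a x * ∏ j, hermiteFun (k j) x| :=
        abs_integral_le_integral_abs
    _ ≤ ∫ x, (2 * (R + 1)) ^ Fintype.card ι * |hermiteFun a x * hermiteFun (k j₀) x| := by
        refine integral_mono (integrable_hermiteFun_mul_prod a k).abs
          ((integrable_hermiteFun_mul _ _).abs.const_mul _) fun x => ?_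
        have h1 : ∏ j ∈ Finset.univ.erase j₀, |hermiteFun (k j) x| ≤
            (2 * (R + 1)) ^ Fintype.card ι := by
          calc _ ≤ ∏ j ∈ Finset.univ.erase j₀, (2 * (R + 1)) :=
                Finset.prod_le_prod (fun _ _ => abs_nonneg _) fun j _ =>
                  (abs_hermiteFun_le _ _).trans (by linarith [hk j])
            _ ≤ _ := by
                rw [Finset.prod_const]
                exact pow_le_pow_right₀ (by linarith) (Finset.card_le_univ _)
        dsimp only
        rw [← Finset.mul_prod_erase _ _ (Finset.mem_univ j₀), ← mul_assoc, abs_mul,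
          Finset.abs_prod, mul_comm]
        gcongr
    _ ≤ (2 * (R + 1)) ^ Fintype.card ι * 1 := by
        rw [integral_const_mul]
        gcongr
        exact integral_abs_hermiteFun_mul_le _ _
    _ = _ := mul_one _

theorem abs_hermiteInt_add_le {ι : Type*} [Fintype ι] [Nonempty ι] (M a : ℕ) {R : ℝ} (k : ι → ℕ)
    (hk : ∀ j, (k j : ℝ) + M ≤ R) :
    |hermiteInt (a + M) k| ≤
      (2 * Fintype.card ι * (√R / √(a + 1))) ^ M * (2 * (R + 1)) ^ Fintype.card ι := by
  classical
  induction M generalizing k with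
  | zero => simpa using abs_hermiteInt_le a k (by simpa using hk)
  | succ M ih =>
    obtain ⟨j₀⟩ := ‹Nonempty ι›
    push_cast at hk
    have hR : 0 ≤ R := le_trans (by positivity) (hk j₀)
    set X := (2 * Fintype.card ι * (√R / √(a + 1))) ^ M * (2 * (R + 1)) ^ Fintype.card ι with hX
    have hX0 : 0 ≤ X := by positivity
    have hdown : ∀ j, |hermiteInt (a + M) (Function.update k j (k j - 1))| ≤ X := fun j =>
      ih _ fun i => by
        rcases eq_or_ne i j with rfl | hij
        · rw [Function.update_self]
          have : ((k i - 1 : ℕ) : ℝ) ≤ k i := by exact_mod_cast Nat.sub_le _ _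
          linarith [hk i]
        · rw [Function.update_of_ne hij]; linarith [hk i]
    have hup : |hermiteInt (a + M) (Function.update k j₀ (k j₀ + 1))| ≤ X :=
      ih _ fun i => by
        rcases eq_or_ne i j₀ with rfl | hij
        · rw [Function.update_self]; push_cast; linarith [hk i]
        · rw [Function.update_of_ne hij]; linarith [hk i]
    have hM : (0 : ℝ) ≤ M := Nat.cast_nonneg M
    have hs : ∀ j, √(2 * k j) ≤ √(2 * R) := fun j => Real.sqrt_le_sqrt (by linarith [hk j])
    have hs' : √(2 * (k j₀ + 1 : ℕ)) ≤ √(2 * R) :=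
      Real.sqrt_le_sqrt (by push_cast; linarith [hk j₀])
    have hcard : (1 : ℝ) ≤ Fintype.card ι := by
      exact_mod_cast Fintype.card_pos_iff.2 ⟨j₀⟩
    have key : √(2 * (a + M + 1 : ℕ)) * |hermiteInt (a + M + 1) k| ≤
        2 * Fintype.card ι * (√(2 * R) * X) := by
      rw [← abs_of_nonneg (Real.sqrt_nonneg (2 * (a + M + 1 : ℕ))), ← abs_mul,
        hermiteInt_succ (a + M) k j₀]
      calc _ ≤ _ := abs_sub _ _
        _ ≤ ∑ j : ι, √(2 * R) * X + ((Fintype.card ι : ℝ) - 1) *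
            (√(2 * R) / 2 * X + √(2 * R) / 2 * X) := by
          refine add_le_add ((Finset.abs_sum_le_sum_abs _ _).trans
            (Finset.sum_le_sum fun j _ => ?_)) ?_
          · rw [abs_mul, abs_of_nonneg (Real.sqrt_nonneg _)]
            exact mul_le_mul (hs j) (hdown j) (abs_nonneg _) (Real.sqrt_nonneg _)
          · rw [abs_mul, abs_of_nonneg (sub_nonneg.2 hcard)]
            refine mul_le_mul_of_nonneg_left ((abs_add_le _ _).trans (add_le_add ?_ ?_))
              (sub_nonneg.2 hcard)
            · rw [abs_mul, abs_of_nonneg (by positivity)]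
              exact mul_le_mul (by linarith [hs j₀]) (hdown j₀) (abs_nonneg _) (by positivity)
            · rw [abs_mul, abs_of_nonneg (by positivity)]
              exact mul_le_mul (by linarith) hup (abs_nonneg _) (by positivity)
        _ ≤ _ := by
          rw [Finset.sum_const, nsmul_eq_mul, Finset.card_univ]
          nlinarith [mul_nonneg (Real.sqrt_nonneg (2 * R)) hX0]
    have hlow : √2 * √(a + 1) ≤ √(2 * (a + M + 1 : ℕ)) := by
      rw [← Real.sqrt_mul (by norm_num)]
      exact Real.sqrt_le_sqrt (by push_cast; linarith)
    have ha : 0 < √((a : ℝ) + 1) := by positivity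
    have h2 : 0 < √(2 : ℝ) := by positivity
    have h3 : √2 * √(a + 1) * |hermiteInt (a + M + 1) k| ≤
        √2 * (2 * Fintype.card ι * (√R * X)) := by
      refine (mul_le_mul_of_nonneg_right hlow (abs_nonneg _)).trans (key.trans_eq ?_)
      rw [Real.sqrt_mul (by norm_num)]; ring
    rw [mul_assoc] at h3
    have h4 := le_of_mul_le_mul_left h3 h2
    rw [← add_assoc, pow_succ]
    calc |hermiteInt (a + M + 1) k| ≤ 2 * Fintype.card ι * (√R * X) / √(a + 1) := by
          rw [le_div_iff₀ ha]; linarith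
      _ = _ := by rw [hX]; ring

theorem integral_prod_hermite3 {ℓ : ℕ} (n : Fin (ℓ + 1) → Fin 3 → ℕ) :
    ∫ x : Rd 3, ∏ j, hermite3 (n j) x = ∏ i, hermiteInt (n 0 i) fun j : Fin ℓ => n j.succ i := by
  have h := (EuclideanSpace.volume_preserving_symm_measurableEquiv_toLp (Fin 3)).integral_comp'
    (fun y : Fin 3 → ℝ => ∏ i, ∏ j, hermiteFun (n j i) (y i))
  rw [integral_fintype_prod_volume_eq_prod (fun i (t : ℝ) => ∏ j, hermiteFun (n j i) t)] at h
  simp only [Fin.prod_univ_succ (n := ℓ)] at h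
  unfold hermiteInt
  rw [← h]
  refine integral_congr_ae (Eventually.of_forall fun x => ?_)
  simp only [hermite3]
  rw [Finset.prod_comm]
  simp only [Fin.prod_univ_succ (n := ℓ)]
  rfl

theorem lam3_sq (n : Fin 3 → ℕ) : lam3 n ^ 2 = 2 * (∑ i, (n i : ℝ)) + 3 :=
  Real.sq_sqrt (by positivity)

theorem one_le_lam3 (n : Fin 3 → ℕ) : 1 ≤ lam3 n :=
  Real.one_le_sqrt.2 (by linarith [Finset.sum_nonneg fun i (_ : i ∈ Finset.univ) =>
    (Nat.cast_nonneg (n i) : (0 : ℝ) ≤ n i)])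

theorem natCast_le_lam3_sq (n : Fin 3 → ℕ) (i : Fin 3) : (n i : ℝ) ≤ lam3 n ^ 2 := by
  have := Finset.single_le_sum (f := fun i => (n i : ℝ)) (fun _ _ => Nat.cast_nonneg _)
    (Finset.mem_univ i)
  rw [lam3_sq]
  linarith [(Nat.cast_nonneg (n i) : (0 : ℝ) ≤ n i)]

theorem exists_lam3_sq_le (n : Fin 3 → ℕ) : ∃ i, lam3 n ^ 2 ≤ 6 * n i + 3 := by
  obtain ⟨i, -, hi⟩ := Finset.exists_max_image Finset.univ n Finset.univ_nonempty
  refine ⟨i, ?_⟩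
  have : ∑ j, (n j : ℝ) ≤ ∑ _j : Fin 3, (n i : ℝ) :=
    Finset.sum_le_sum fun j hj => by exact_mod_cast hi j hj
  simp at this
  rw [lam3_sq]
  simp
  linarith

/-- If `Λ^{1+δ} ≤ L`, a high power of `Λ / L` beats any fixed power of `L`. -/
theorem div_pow_mul_pow_le_one {δ Λ L : ℝ} (hδ : 0 < δ) (hΛ : 1 ≤ Λ) (hL : 1 ≤ L)
    (h : Λ ^ (1 + δ) ≤ L) {M p : ℕ} (hM : (p : ℝ) ≤ M * (δ / (1 + δ))) :
    (Λ / L) ^ M * L ^ p ≤ 1 := by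
  have hL0 : 0 < L := by linarith
  have hd : 0 < 1 + δ := by linarith
  have h1 : Λ ≤ L ^ (1 / (1 + δ)) := by
    have := Real.rpow_le_rpow (by positivity) h (by positivity : 0 ≤ 1 / (1 + δ))
    rwa [← Real.rpow_mul (by linarith), mul_one_div_cancel hd.ne', Real.rpow_one] at this
  have h2 : Λ / L ≤ L ^ (-(δ / (1 + δ))) := by
    rw [div_le_iff₀ hL0]
    refine h1.trans_eq ?_
    nth_rw 3 [← Real.rpow_one L]
    rw [← Real.rpow_add hL0]
    congr 1
    field_simp
    ring
  calc (Λ / L) ^ M * L ^ p ≤ (L ^ (-(δ / (1 + δ)))) ^ M * L ^ p := by gcongr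
    _ = L ^ (-(δ / (1 + δ)) * M + p) := by
      rw [← Real.rpow_natCast, ← Real.rpow_mul hL0.le, ← Real.rpow_natCast L p,
        ← Real.rpow_add hL0]
    _ ≤ 1 := Real.rpow_le_one_of_one_le_of_nonpos hL (by linarith)

/-- Fast decay of the integral of a product of `ℓ ≥ 4` Hermite functions when
the largest frequency dominates: if `λ_{n₁} ≥ λ_{n₂}^{1+δ}` and `λ_{n₂} ≥ λ_{n₃} ≥ ⋯ ≥ λ_{n_ℓ}`,
then `|∫ ∏_j h_{n_j}| ≤ C_N λ_{n₁}^{-N}`. -/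
theorem statement_11 (δ : ℝ) (hδ : 0 < δ) (ℓ : ℕ) (hℓ : 4 ≤ ℓ) (N : ℕ) (hN : 1 ≤ N) :
    ∃ C : ℝ, 0 < C ∧ ∀ n : Fin ℓ → (Fin 3 → ℕ),
      lam3 (n ⟨1, by omega⟩) ^ (1 + δ) ≤ lam3 (n ⟨0, by omega⟩) →
      (∀ i j : Fin ℓ, 1 ≤ (i : ℕ) → i ≤ j → lam3 (n j) ≤ lam3 (n i)) →
      |∫ x : Rd 3, ∏ j, hermite3 (n j) x| ≤ C * lam3 (n ⟨0, by omega⟩) ^ (-(N : ℝ)) := by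
  obtain ⟨m, rfl⟩ : ∃ m, ℓ = m + 1 := ⟨ℓ - 1, by omega⟩
  obtain ⟨M, hM⟩ := exists_nat_ge (((6 * m + N : ℕ) : ℝ) / (δ / (1 + δ)))
  rw [div_le_iff₀ (by positivity)] at hM
  have hm0 : 0 < m := by omega
  refine ⟨((2 * (M + 2) : ℝ) ^ m) ^ 3 *
    ((12 * m * (M + 1) : ℝ) ^ M + (6 * M + 3 : ℝ) ^ (6 * m + N)), by positivity, ?_⟩
  intro n h01 hmono
  have : Nonempty (Fin m) := ⟨⟨0, hm0⟩⟩
  set Λ := lam3 (n ⟨1, by omega⟩)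
  change _ ≤ lam3 (n 0) at h01
  change _ ≤ _ * lam3 (n 0) ^ (-(N : ℝ))
  set L := lam3 (n 0) with hLdef
  have hΛ : 1 ≤ Λ := one_le_lam3 _
  have hL : 1 ≤ L := one_le_lam3 _
  have hΛL : Λ ≤ L := (Real.self_le_rpow_of_one_le hΛ (by linarith)).trans h01
  have hk : ∀ i (j : Fin m), (n j.succ i : ℝ) + M ≤ (1 + M) * Λ ^ 2 := by
    intro i j
    have h1 : lam3 (n j.succ) ≤ Λ := hmono _ _ le_rfl (by simp [Fin.le_def])
    have h2 : lam3 (n j.succ) ^ 2 ≤ Λ ^ 2 :=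
      pow_le_pow_left₀ (zero_le_one.trans (one_le_lam3 _)) h1 2
    have h3 := natCast_le_lam3_sq (n j.succ) i
    have h4 : (M : ℝ) * 1 ≤ M * Λ ^ 2 :=
      mul_le_mul_of_nonneg_left (one_le_pow₀ hΛ) (Nat.cast_nonneg M)
    linarith
  set T := (2 * (M + 2) : ℝ) ^ m * L ^ (2 * m) with hT
  have hT0 : 0 ≤ T := by positivity
  have hRT : (2 * ((1 + M) * Λ ^ 2 + 1)) ^ m ≤ T := by
    rw [hT, pow_mul, ← mul_pow]
    have h1 : Λ ^ 2 ≤ L ^ 2 := by gcongr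
    have h2 : (1 + M) * Λ ^ 2 ≤ (1 + M) * L ^ 2 := by gcongr
    exact pow_le_pow_left₀ (by positivity) (by nlinarith) m
  have hI : ∀ i, |hermiteInt (n 0 i) fun j : Fin m => n j.succ i| ≤ T := fun i => by
    have := abs_hermiteInt_le (n 0 i) (fun j : Fin m => n j.succ i) (R := (1 + M) * Λ ^ 2)
      fun j => by linarith [hk i j, (Nat.cast_nonneg M : (0 : ℝ) ≤ M)]
    rw [Fintype.card_fin] at this
    exact this.trans hRT
  obtain ⟨i₀, hi₀⟩ := exists_lam3_sq_le (n 0)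
  rw [← hLdef] at hi₀
  obtain ⟨G, hG0, hIG, hG⟩ : ∃ G : ℝ, 0 ≤ G ∧
      |hermiteInt (n 0 i₀) fun j : Fin m => n j.succ i₀| ≤ G * T ∧ G * L ^ (6 * m + N) ≤
        (12 * m * (M + 1) : ℝ) ^ M + (6 * M + 3 : ℝ) ^ (6 * m + N) := by
    rcases lt_or_ge (n 0 i₀) M with ha | ha
    · refine ⟨1, zero_le_one, by simpa using hI i₀, ?_⟩
      have ha' : (n 0 i₀ : ℝ) ≤ M := by exact_mod_cast ha.le
      have hL' : L ≤ 6 * M + 3 := by nlinarith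
      rw [one_mul]
      refine (pow_le_pow_left₀ (by linarith) hL' _).trans (le_add_of_nonneg_left (by positivity))
    · obtain ⟨a, ha⟩ := Nat.exists_eq_add_of_le' ha
      rw [ha] at hi₀
      push_cast at hi₀
      have hq : √((1 + M) * Λ ^ 2) / √(a + 1) ≤ 6 * (M + 1) * (Λ / L) := by
        rw [← Real.sqrt_div (by positivity)]
        refine Real.sqrt_le_iff.2 ⟨by positivity, ?_⟩
        have hLa : L ^ 2 ≤ 6 * (M + 1) * (a + 1) := by
          nlinarith [mul_nonneg (Nat.cast_nonneg M : (0 : ℝ) ≤ M)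
            (Nat.cast_nonneg a : (0 : ℝ) ≤ a)]
        have hrw : (6 * (M + 1) * (Λ / L)) ^ 2 = (36 * (M + 1) ^ 2 * Λ ^ 2) / L ^ 2 := by
          field_simp
          ring
        rw [hrw, div_le_div_iff₀ (by positivity) (by positivity)]
        calc (1 + M) * Λ ^ 2 * L ^ 2 ≤ (1 + M) * Λ ^ 2 * (6 * (M + 1) * (a + 1)) := by gcongr
          _ = 6 * ((M + 1) ^ 2 * Λ ^ 2 * (a + 1)) := by ring
          _ ≤ 36 * ((M + 1) ^ 2 * Λ ^ 2 * (a + 1)) := by gcongr; norm_num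
          _ = _ := by ring
      refine ⟨(12 * m * (M + 1) : ℝ) ^ M * (Λ / L) ^ M, by positivity, ?_, ?_⟩
      · rw [ha]
        refine (abs_hermiteInt_add_le M a _ (hk i₀)).trans ?_
        rw [Fintype.card_fin, ← mul_pow]
        refine mul_le_mul (pow_le_pow_left₀ (by positivity) ?_ M) hRT (by positivity)
          (by positivity)
        calc _ ≤ 2 * m * (6 * (M + 1) * (Λ / L)) := by gcongr
          _ = _ := by ring
      · rw [mul_assoc]
        calc _ ≤ (12 * m * (M + 1) : ℝ) ^ M * 1 := by
              gcongr
              exact div_pow_mul_pow_le_one hδ hΛ hL h01 hM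
          _ ≤ _ := by rw [mul_one]; exact le_add_of_nonneg_right (by positivity)
  rw [integral_prod_hermite3, Finset.abs_prod, ← Finset.mul_prod_erase _ _ (Finset.mem_univ i₀),
    Real.rpow_neg (by linarith), Real.rpow_natCast, ← div_eq_mul_inv, le_div_iff₀ (by positivity)]
  have hprod : ∏ i ∈ Finset.univ.erase i₀, |hermiteInt (n 0 i) fun j : Fin m => n j.succ i| ≤
      T ^ 2 := by
    refine (Finset.prod_le_prod (fun _ _ => abs_nonneg _) fun i _ => hI i).trans_eq ?_
    rw [Finset.prod_const, Finset.card_erase_of_mem (Finset.mem_univ _)]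
    rfl
  calc _ ≤ G * T * T ^ 2 * L ^ N := by gcongr
    _ = ((2 * (M + 2) : ℝ) ^ m) ^ 3 * (G * L ^ (6 * m + N)) := by
      rw [hT, pow_add, show 6 * m = 2 * m * 3 by ring, pow_mul L (2 * m) 3]
      ring
    _ ≤ _ := by gcongr

end
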